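/- Per-index bound in the converse of Theorem 7: for every integer N ≥ 3, every h ∈ {0,1,…,⌊(N−3)/2⌋}, every PIR scheme with cyclic-graph storage on N servers and privacy sets 𝒫_n equal to the cyclic interval of indices [n−h−1 : n+h] (taken modulo N), and every index k ∈ {1,…,N}, the download cost satisfies D_k ≥ L + Σ_{l=k−h}^{k} H(A_l^{[l−1]} | (W_j)_{j≠l−1}, 𝒬) + Σ_{l=k+1}^{k+h+1} H(A_l^{[l]} | (W_j)_{j≠l}, 𝒬), where all server and message indices are taken modulo N. -/

import Mathlib

/-!
The bound is a chain of Shannon-type inequalities. Subadditivity and the fact that conditioning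
reduces entropy give `D k ≥ H(A_1, …, A_N | 𝒬)`, and decodability together with the independence
of `W k` and `𝒬` turns the right-hand side into `L + H(A_1, …, A_N | W k, 𝒬)`.

In the second term only the answers of the servers `k, k-1, …, k-h, k+1, …, k+h+1` are kept and
expanded by the chain rule in this order. Server `l` stores the messages `l-1` and `l`. Since
`2h + 3 ≤ N`, the messages `k-h-1, …, k+h+1` are pairwise distinct, so for `l ≤ k` the earlier
servers do not store message `l-1`, and for `l > k` they do not store message `l`. Conditioning in
addition on all messages but this one makes the earlier answers redundant
(`sum_le_Hc_joint`). Finally `k` lies in the privacy set of each of these servers, so the index `k`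
may be replaced by `l-1` or `l`.

Everything rests on the submodularity of entropy (`H_submod`), which follows from
`log x ≤ x - 1`. Comparisons of random variables are phrased as implications
`X ω = X ω' → Y ω = Y ω'`, meaning that `Y` is a function of `X`.
-/

/-!
Formalization of PIR with arbitrary privacy requirement sets.

A PIR scheme with `N` servers and `K` messages of equal length `L > 0` is modeled
by finitely-valued random variables on a common finite probability space:
messages `W 1, …, W K`, and for each server `n ∈ [1:N]` and desired index
`k ∈ [1:K]`, a query `Q n k` and an answer `A n k`.  Shannon entropy,
conditional entropy and (conditional) mutual information are defined from the
probability mass function `p`.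
-/

open scoped Classical BigOperators

noncomputable section

/-- A PIR scheme: a finite probability space together with the message, query and
answer random variables.  Only the variables indexed by `n ∈ [1:N]`, `k ∈ [1:K]`
are meaningful; all random variables are finitely valued (`ℕ`-valued on a finite
sample space). -/
structure PIRScheme (N K : ℕ) (L : ℝ) where
  /-- the sample space -/
  Ω : Type
  [fin : Fintype Ω]
  /-- the probability mass function -/
  p : Ω → ℝ
  p_nonneg : ∀ ω, 0 ≤ p ω
  p_sum : ∑ ω : Ω, p ω = 1
  /-- the messages `W i`, `i ∈ [1:K]` -/
  W : ℕ → Ω → ℕ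
  /-- `Q n k` is the query sent to server `n` when retrieving message `k` -/
  Q : ℕ → ℕ → Ω → ℕ
  /-- `A n k` is the answer of server `n` when retrieving message `k` -/
  A : ℕ → ℕ → Ω → ℕ

attribute [instance] PIRScheme.fin

namespace PIRScheme

variable {N K : ℕ} {L : ℝ} (S : PIRScheme N K L)

/-- `P[X = v]`. -/
def prob {α : Type*} (X : S.Ω → α) (v : α) : ℝ :=
  ∑ ω : S.Ω, if X ω = v then S.p ω else 0

/-- Shannon entropy `H(X)`. -/
def H {α : Type*} (X : S.Ω → α) : ℝ :=
  - ∑ ω : S.Ω, S.p ω * Real.log (S.prob X (X ω))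

/-- Conditional entropy `H(X | Y) := H(X, Y) - H(Y)`. -/
def Hc {α β : Type*} (X : S.Ω → α) (Y : S.Ω → β) : ℝ :=
  S.H (fun ω => (X ω, Y ω)) - S.H Y

/-- Mutual information `I(X ; Y) := H(X) + H(Y) - H(X, Y)`. -/
def MI {α β : Type*} (X : S.Ω → α) (Y : S.Ω → β) : ℝ :=
  S.H X + S.H Y - S.H (fun ω => (X ω, Y ω))

/-- Conditional mutual information `I(X ; Y | Z) := H(X|Z) + H(Y|Z) - H(X,Y|Z)`. -/
def MIc {α β γ : Type*} (X : S.Ω → α) (Y : S.Ω → β) (Z : S.Ω → γ) : ℝ :=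
  S.Hc X Z + S.Hc Y Z - S.Hc (fun ω => (X ω, Y ω)) Z

/-- The joint random variable `(W j)_{j ∈ T}` of a subcollection of the messages. -/
def jointW (T : Finset ℕ) : S.Ω → (T → ℕ) := fun ω j => S.W j ω

/-- The joint random variable of all `K` messages. -/
def allW : S.Ω → (Finset.Icc 1 K → ℕ) := S.jointW (Finset.Icc 1 K)

/-- `𝒬`: the tuple of all queries `Q n k`, `n ∈ [1:N]`, `k ∈ [1:K]`. -/
def allQ : S.Ω → ((Finset.Icc 1 N ×ˢ Finset.Icc 1 K : Finset (ℕ × ℕ)) → ℕ) :=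
  fun ω x => S.Q x.1.1 x.1.2 ω

/-- The tuple of answers `(A 1 k, …, A N k)` when retrieving message `k`. -/
def ansVec (k : ℕ) : S.Ω → (Finset.Icc 1 N → ℕ) := fun ω n => S.A n k ω

/-- The download cost `D k := ∑_{n=1}^N H(A n k)`. -/
def D (k : ℕ) : ℝ := ∑ n ∈ Finset.Icc 1 N, S.H (S.A n k)

/-- The rate `R := K ⬝ L / ∑_{k=1}^K D k`. -/
def rate : ℝ := (K * L) / ∑ k ∈ Finset.Icc 1 K, S.D k

/-- Validity of a PIR scheme with respect to storage index sets `I n` and privacy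
requirement sets `P n`:
(messages) the messages each have entropy `L` and are mutually independent;
(i) the messages are independent of all the queries;
(ii) each answer is a function of the server's storage and received query;
(iii) privacy: for all `θ1, θ2 ∈ P n` and every subcollection `T` of the messages,
  the answer of server `n` has the same conditional entropy whether `θ1` or `θ2`
  is being retrieved;
(iv) decodability: message `k` is determined by all the answers and the queries. -/
structure IsValid (S : PIRScheme N K L) (I P : ℕ → Finset ℕ) : Prop where
  msg_entropy : ∀ i ∈ Finset.Icc 1 K, S.H (S.W i) = L
  msg_indep : S.H S.allW = ∑ i ∈ Finset.Icc 1 K, S.H (S.W i)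
  stor_sub_priv : ∀ n ∈ Finset.Icc 1 N, I n ⊆ P n
  priv_sub : ∀ n ∈ Finset.Icc 1 N, P n ⊆ Finset.Icc 1 K
  query_indep : S.MI S.allW S.allQ = 0
  ans_det : ∀ n ∈ Finset.Icc 1 N, ∀ k ∈ Finset.Icc 1 K,
    S.Hc (S.A n k) (fun ω => (S.jointW (I n) ω, S.Q n k ω)) = 0
  privacy : ∀ n ∈ Finset.Icc 1 N, ∀ θ1 ∈ P n, ∀ θ2 ∈ P n, ∀ T ⊆ Finset.Icc 1 K,
    S.Hc (S.A n θ1) (fun ω => (S.jointW T ω, S.allQ ω)) =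
      S.Hc (S.A n θ2) (fun ω => (S.jointW T ω, S.allQ ω))
  decodable : ∀ k ∈ Finset.Icc 1 K, S.Hc (S.W k) (fun ω => (S.ansVec k ω, S.allQ ω)) = 0

end PIRScheme

/-- Path-graph storage on `N` servers (`K = N - 1` messages):
`𝒲_1 = {W 1}`, `𝒲_n = {W (n-1), W n}` for `2 ≤ n ≤ N - 1`, `𝒲_N = {W (N-1)}`. -/
def pathIndex (N : ℕ) : ℕ → Finset ℕ := fun n =>
  if n = 1 then {1} else if n = N then {N - 1} else {n - 1, n}

/-- Modified-edge-server privacy sets on the path graph: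
`𝒫_1 = 𝒫_2 = {1, 2}`, `𝒫_N = 𝒫_{N-1} = {N-2, N-1}`, and `𝒫_n = {n-1, n}`
for `2 ≤ n ≤ N - 1`. -/
def pathModEdgePriv (N : ℕ) : ℕ → Finset ℕ := fun n =>
  if n ≤ 2 then {1, 2} else if N - 1 ≤ n then {N - 2, N - 1} else {n - 1, n}

/-- The representative of `m` modulo `N` lying in `{1, …, N}` (so that index `0`
is identified with index `N`). -/
def cyc (N : ℕ) (m : ℤ) : ℕ := (((m - 1) % (N : ℤ)) + 1).toNat

/-- Cyclic-graph storage on `N` servers (`K = N` messages):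
`𝒲_n = {W (n-1), W n}` with indices mod `N`, i.e. `ℐ_n = {n - 1, n} (mod N)`. -/
def cycIndex (N : ℕ) : ℕ → Finset ℕ := fun n => {cyc N ((n : ℤ) - 1), cyc N (n : ℤ)}

/-- The cyclic interval `[a : a + len - 1]` of `len` consecutive indices mod `N`,
as a subset of `{1, …, N}`. -/
def cycInterval (N : ℕ) (a : ℤ) (len : ℕ) : Finset ℕ :=
  (Finset.range len).image fun j => cyc N (a + j)

namespace PIRScheme

variable {N K : ℕ} {L : ℝ} (S : PIRScheme N K L)

/-! ### Entropy inequalities -/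

section Entropy

variable {α β γ δ : Type*}

lemma le_prob (X : S.Ω → α) (ω : S.Ω) : S.p ω ≤ S.prob X (X ω) := by
  have h := Finset.single_le_sum (f := fun ω' => if X ω' = X ω then S.p ω' else 0)
    (fun i _ => by split_ifs <;> simp [S.p_nonneg]) (Finset.mem_univ ω)
  simpa [prob] using h

lemma prob_nonneg (X : S.Ω → α) (v : α) : 0 ≤ S.prob X v :=
  Finset.sum_nonneg fun i _ => by split_ifs <;> simp [S.p_nonneg]

lemma prob_le_prob {X : S.Ω → α} {Y : S.Ω → β} (h : ∀ ω ω', X ω = X ω' → Y ω = Y ω')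
    (ω : S.Ω) : S.prob X (X ω) ≤ S.prob Y (Y ω) := by
  refine Finset.sum_le_sum fun i _ => ?_
  by_cases hi : X i = X ω
  · simp [hi, h i ω hi]
  · simp only [hi, if_false]
    split_ifs <;> simp [S.p_nonneg]

/-- A function of `X` has at most the entropy of `X`. -/
lemma H_mono {X : S.Ω → α} {Y : S.Ω → β} (h : ∀ ω ω', X ω = X ω' → Y ω = Y ω') :
    S.H Y ≤ S.H X := by
  unfold H
  refine neg_le_neg (Finset.sum_le_sum fun ω _ => ?_)
  rcases (S.p_nonneg ω).eq_or_lt with h0 | h0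
  · simp [← h0]
  · exact mul_le_mul_of_nonneg_left
      (Real.log_le_log (h0.trans_le (S.le_prob X ω)) (S.prob_le_prob h ω)) h0.le

lemma H_congr {X : S.Ω → α} {Y : S.Ω → β} (h : ∀ ω ω', X ω = X ω' ↔ Y ω = Y ω') :
    S.H X = S.H Y :=
  le_antisymm (S.H_mono fun ω ω' => (h ω ω').2) (S.H_mono fun ω ω' => (h ω ω').1)

lemma H_const (c : α) : S.H (fun _ => c) = 0 := by
  simp [H, prob, S.p_sum]

/-- The total mass `∑ P(x, z) P(y, z) / P(z)` over the values `(x, y, z)` taken by `(X, Y, Z)` is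
at most one, written as an expectation over the sample space. -/
lemma submod_aux (X : S.Ω → α) (Y : S.Ω → β) (Z : S.Ω → γ) :
    ∑ ω, S.p ω * (S.prob (fun ω => (X ω, Z ω)) (X ω, Z ω) *
        S.prob (fun ω => (Y ω, Z ω)) (Y ω, Z ω) /
        (S.prob (fun ω => (X ω, Y ω, Z ω)) (X ω, Y ω, Z ω) * S.prob Z (Z ω))) ≤ 1 := by
  -- Expand both numerators as sums over independent sample points `a`, `b`, and sum over `ω` first.
  have key : ∀ a b : S.Ω,
      ∑ ω, (if X a = X ω ∧ Z a = Z ω then (1 : ℝ) else 0) *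
        (if Y b = Y ω ∧ Z b = Z ω then (1 : ℝ) else 0) *
        (S.p ω / (S.prob (fun ω => (X ω, Y ω, Z ω)) (X ω, Y ω, Z ω) * S.prob Z (Z ω)))
      ≤ (if Z b = Z a then 1 else 0) / S.prob Z (Z a) := by
    intro a b
    by_cases hz : Z b = Z a
    · have e : ∀ ω, (if X a = X ω ∧ Z a = Z ω then (1 : ℝ) else 0) *
          (if Y b = Y ω ∧ Z b = Z ω then (1 : ℝ) else 0) *
          (S.p ω / (S.prob (fun ω => (X ω, Y ω, Z ω)) (X ω, Y ω, Z ω) * S.prob Z (Z ω)))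
          = (if (X ω, Y ω, Z ω) = (X a, Y b, Z a) then S.p ω else 0) *
            (1 / (S.prob (fun ω => (X ω, Y ω, Z ω)) (X a, Y b, Z a) * S.prob Z (Z a))) := by
        intro ω
        by_cases h1 : X a = X ω
        · by_cases h2 : Y b = Y ω
          · by_cases h3 : Z a = Z ω
            · simp [h1, h2, h3, hz, div_eq_mul_inv]
            · simp [h3, Ne.symm h3]
          · simp [h2, Ne.symm h2]
        · simp [h1, Ne.symm h1]
      rw [Finset.sum_congr rfl fun ω _ => e ω, ← Finset.sum_mul]
      have hs : (∑ ω, if (X ω, Y ω, Z ω) = (X a, Y b, Z a) then S.p ω else 0) =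
          S.prob (fun ω => (X ω, Y ω, Z ω)) (X a, Y b, Z a) := by
        unfold prob
        congr!
      rw [hs, if_pos hz, one_div, mul_inv, ← mul_assoc, one_div]
      refine mul_le_of_le_one_left (inv_nonneg.2 (S.prob_nonneg _ _)) ?_
      exact mul_inv_le_one
    · rw [if_neg hz, zero_div]
      refine (Finset.sum_eq_zero fun ω _ => ?_).le
      by_cases h3 : Z a = Z ω
      · have : Z b ≠ Z ω := fun h => hz (h.trans h3.symm)
        simp [this]
      · simp [h3]
  have e : ∀ ω, S.p ω * (S.prob (fun ω => (X ω, Z ω)) (X ω, Z ω) *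
        S.prob (fun ω => (Y ω, Z ω)) (Y ω, Z ω) /
        (S.prob (fun ω => (X ω, Y ω, Z ω)) (X ω, Y ω, Z ω) * S.prob Z (Z ω)))
      = ∑ a, ∑ b, S.p a * S.p b * ((if X a = X ω ∧ Z a = Z ω then (1 : ℝ) else 0) *
        (if Y b = Y ω ∧ Z b = Z ω then (1 : ℝ) else 0) *
        (S.p ω / (S.prob (fun ω => (X ω, Y ω, Z ω)) (X ω, Y ω, Z ω) * S.prob Z (Z ω)))) := by
    intro ω
    have h1 : S.prob (fun ω => (X ω, Z ω)) (X ω, Z ω) =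
        ∑ a, S.p a * (if X a = X ω ∧ Z a = Z ω then (1 : ℝ) else 0) := by
      simp [prob]
    have h2 : S.prob (fun ω => (Y ω, Z ω)) (Y ω, Z ω) =
        ∑ a, S.p a * (if Y a = Y ω ∧ Z a = Z ω then (1 : ℝ) else 0) := by
      simp [prob]
    rw [h1, h2, Finset.sum_mul_sum, mul_div_assoc', mul_comm (S.p ω), mul_div_assoc,
      Finset.sum_mul]
    refine Finset.sum_congr rfl fun a _ => ?_
    rw [Finset.sum_mul]
    exact Finset.sum_congr rfl fun b _ => by ring
  rw [Finset.sum_congr rfl fun ω _ => e ω, Finset.sum_comm]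
  calc _ ≤ ∑ a, S.p a := ?_
    _ = 1 := S.p_sum
  refine Finset.sum_le_sum fun a _ => ?_
  rw [Finset.sum_comm]
  calc _ ≤ ∑ b, S.p a * S.p b * ((if Z b = Z a then 1 else 0) / S.prob Z (Z a)) := by
        refine Finset.sum_le_sum fun b _ => ?_
        rw [← Finset.mul_sum]
        exact mul_le_mul_of_nonneg_left (key a b) (mul_nonneg (S.p_nonneg a) (S.p_nonneg b))
    _ = S.p a * (S.prob Z (Z a) * (S.prob Z (Z a))⁻¹) := by
        conv_rhs => rw [show S.prob Z (Z a) * (S.prob Z (Z a))⁻¹ =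
          (∑ b, if Z b = Z a then S.p b else 0) * (S.prob Z (Z a))⁻¹ from rfl]
        rw [Finset.sum_mul, Finset.mul_sum]
        refine Finset.sum_congr rfl fun b _ => ?_
        split_ifs <;> ring
    _ ≤ S.p a := mul_le_of_le_one_right (S.p_nonneg a) mul_inv_le_one

/-- Submodularity of entropy: `H(X, Y, Z) + H(Z) ≤ H(X, Z) + H(Y, Z)`. -/
lemma H_submod (X : S.Ω → α) (Y : S.Ω → β) (Z : S.Ω → γ) :
    S.H (fun ω => (X ω, Y ω, Z ω)) + S.H Z ≤
      S.H (fun ω => (X ω, Z ω)) + S.H (fun ω => (Y ω, Z ω)) := by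
  have hpt : ∀ ω, S.p ω * Real.log (S.prob (fun ω => (X ω, Z ω)) (X ω, Z ω)) +
        S.p ω * Real.log (S.prob (fun ω => (Y ω, Z ω)) (Y ω, Z ω)) -
        S.p ω * Real.log (S.prob (fun ω => (X ω, Y ω, Z ω)) (X ω, Y ω, Z ω)) -
        S.p ω * Real.log (S.prob Z (Z ω)) ≤
      S.p ω * (S.prob (fun ω => (X ω, Z ω)) (X ω, Z ω) *
        S.prob (fun ω => (Y ω, Z ω)) (Y ω, Z ω) /
        (S.prob (fun ω => (X ω, Y ω, Z ω)) (X ω, Y ω, Z ω) * S.prob Z (Z ω))) - S.p ω := by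
    intro ω
    rcases (S.p_nonneg ω).eq_or_lt with h0 | h0
    · simp [← h0]
    · have p1 := h0.trans_le (S.le_prob (fun ω => (X ω, Z ω)) ω)
      have p2 := h0.trans_le (S.le_prob (fun ω => (Y ω, Z ω)) ω)
      have p3 := h0.trans_le (S.le_prob (fun ω => (X ω, Y ω, Z ω)) ω)
      have p4 := h0.trans_le (S.le_prob Z ω)
      have hl := Real.log_le_sub_one_of_pos (div_pos (mul_pos p1 p2) (mul_pos p3 p4))
      rw [Real.log_div (mul_pos p1 p2).ne' (mul_pos p3 p4).ne', Real.log_mul p1.ne' p2.ne',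
        Real.log_mul p3.ne' p4.ne'] at hl
      have := mul_le_mul_of_nonneg_left hl h0.le
      linarith
  have hs := Finset.sum_le_sum fun ω (_ : ω ∈ Finset.univ) => hpt ω
  simp only [Finset.sum_sub_distrib, Finset.sum_add_distrib, S.p_sum] at hs
  have := S.submod_aux X Y Z
  unfold H
  linarith

lemma Hc_nonneg (X : S.Ω → α) (Y : S.Ω → β) : 0 ≤ S.Hc X Y :=
  sub_nonneg.2 (S.H_mono fun _ _ h => (Prod.ext_iff.1 h).2)

/-- Conditioning on more information reduces entropy. -/
lemma Hc_anti (X : S.Ω → α) {Y : S.Ω → β} {Z : S.Ω → γ}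
    (h : ∀ ω ω', Z ω = Z ω' → Y ω = Y ω') : S.Hc X Z ≤ S.Hc X Y := by
  have h1 := S.H_submod X Z Y
  have h2 : S.H (fun ω => (X ω, Z ω, Y ω)) = S.H (fun ω => (X ω, Z ω)) :=
    S.H_congr fun ω ω' => by
      have := h ω ω'
      simp only [Prod.mk.injEq]
      tauto
  have h3 : S.H (fun ω => (Z ω, Y ω)) = S.H Z :=
    S.H_congr fun ω ω' => by
      have := h ω ω'
      simp only [Prod.mk.injEq]
      tauto
  unfold Hc
  linarith

lemma Hc_mono {X : S.Ω → α} {Y : S.Ω → β} (Z : S.Ω → γ)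
    (h : ∀ ω ω', X ω = X ω' → Y ω = Y ω') : S.Hc Y Z ≤ S.Hc X Z := by
  refine sub_le_sub_right (S.H_mono fun ω ω' hx => ?_) _
  have := h ω ω'
  simp only [Prod.mk.injEq] at hx ⊢
  tauto

lemma Hc_le_H (X : S.Ω → α) (Y : S.Ω → β) : S.Hc X Y ≤ S.H X := by
  have h := S.Hc_anti X (Y := fun _ => ()) (Z := Y) fun _ _ _ => rfl
  have h2 : S.H (fun ω => (X ω, ())) = S.H X := S.H_congr fun ω ω' => by simp
  have h3 := S.H_const ()
  have h4 : S.Hc X (fun _ => ()) = S.H (fun ω => (X ω, ())) - S.H (fun _ => ()) := rfl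
  linarith

/-- Chain rule, for `T` carrying the same information as `(X, Y)`. -/
lemma Hc_chain {X : S.Ω → α} {Y : S.Ω → β} {T : S.Ω → δ} (Z : S.Ω → γ)
    (h : ∀ ω ω', T ω = T ω' ↔ X ω = X ω' ∧ Y ω = Y ω') :
    S.Hc T Z = S.Hc X Z + S.Hc Y (fun ω => (X ω, Z ω)) := by
  have h1 : S.H (fun ω => (T ω, Z ω)) = S.H (fun ω => (Y ω, X ω, Z ω)) :=
    S.H_congr fun ω ω' => by
      have := h ω ω'
      simp only [Prod.mk.injEq]
      tauto
  unfold Hc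
  linarith

end Entropy

/-! ### Families of random variables -/

section Joint

variable {ι γ : Type*}

/-- The joint random variable `(X i)_{i ∈ T}`. -/
def joint (X : ι → S.Ω → ℕ) (T : Finset ι) : S.Ω → (T → ℕ) := fun ω i => X i ω

lemma joint_eq_iff (X : ι → S.Ω → ℕ) (T : Finset ι) (ω ω' : S.Ω) :
    S.joint X T ω = S.joint X T ω' ↔ ∀ i ∈ T, X i ω = X i ω' := by
  simp [joint, funext_iff]

lemma jointW_eq_iff (T : Finset ℕ) (ω ω' : S.Ω) :
    S.jointW T ω = S.jointW T ω' ↔ ∀ i ∈ T, S.W i ω = S.W i ω' :=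
  S.joint_eq_iff S.W T ω ω'

lemma Hc_joint_insert [DecidableEq ι] (X : ι → S.Ω → ℕ) (T : Finset ι) (a : ι) (Z : S.Ω → γ) :
    S.Hc (S.joint X (insert a T)) Z =
      S.Hc (S.joint X T) Z + S.Hc (X a) (fun ω => (S.joint X T ω, Z ω)) :=
  S.Hc_chain Z fun ω ω' => by
    simp only [joint_eq_iff, Finset.forall_mem_insert]
    tauto

lemma Hc_joint_empty (X : ι → S.Ω → ℕ) (Z : S.Ω → γ) : S.Hc (S.joint X ∅) Z = 0 :=
  sub_eq_zero.2 (S.H_congr fun ω ω' => by simp [joint_eq_iff])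

/-- Subadditivity of conditional entropy. -/
lemma Hc_joint_le (X : ι → S.Ω → ℕ) (T : Finset ι) (Z : S.Ω → γ) :
    S.Hc (S.joint X T) Z ≤ ∑ i ∈ T, S.Hc (X i) Z := by
  induction T using Finset.induction_on with
  | empty => simp [Hc_joint_empty]
  | insert a T ha ih =>
    rw [Hc_joint_insert, Finset.sum_insert ha]
    have := S.Hc_anti (X a) (Y := Z) (Z := fun ω => (S.joint X T ω, Z ω))
      fun _ _ h => (Prod.ext_iff.1 h).2
    linarith

/-- If each `V i` determines `Z` and, up to null sets, all the `X j` with `j < i`, then the chain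
rule bounds the entropy of `(X i)_{i < m}` given `Z` from below by the sum of the `H(X i | V i)`. -/
lemma sum_le_Hc_joint (X : ℕ → S.Ω → ℕ) (Z : S.Ω → γ) {V' : ℕ → Type*}
    (V : ∀ i, S.Ω → V' i) (m : ℕ)
    (hV : ∀ i < m, ∀ ω ω', V i ω = V i ω' → Z ω = Z ω')
    (hX : ∀ i < m, ∀ j < i, S.Hc (X j) (V i) = 0) :
    ∑ i ∈ Finset.range m, S.Hc (X i) (V i) ≤ S.Hc (S.joint X (Finset.range m)) Z := by
  induction m with
  | zero => simp [Hc_joint_empty]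
  | succ m ih =>
    have ih' := ih (fun i hi => hV i (hi.trans m.lt_succ_self))
      (fun i hi => hX i (hi.trans m.lt_succ_self))
    rw [Finset.sum_range_succ, Finset.range_add_one, Hc_joint_insert]
    have h1 := S.Hc_anti (X m) (Y := fun ω => (S.joint X (Finset.range m) ω, Z ω))
      (Z := fun ω => (S.joint X (Finset.range m) ω, V m ω)) fun ω ω' h => by
        have := hV m m.lt_succ_self ω ω'
        simp only [Prod.mk.injEq] at h ⊢
        tauto
    -- The earlier variables are redundant given `V m`.
    have h2 : S.Hc (S.joint X (Finset.range m)) (V m) ≤ 0 :=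
      (S.Hc_joint_le X _ (V m)).trans
        (Finset.sum_eq_zero fun j hj => hX m m.lt_succ_self j (Finset.mem_range.1 hj)).le
    have h3 : S.H (fun ω => (X m ω, V m ω)) ≤
        S.H (fun ω => (X m ω, S.joint X (Finset.range m) ω, V m ω)) :=
      S.H_mono fun ω ω' h => by
        simp only [Prod.mk.injEq] at h ⊢
        tauto
    unfold Hc at *
    linarith

end Joint

/-! ### Consequences of validity -/

section Valid

variable {I P : ℕ → Finset ℕ}

lemma IsValid.Hc_W_allQ {S : PIRScheme N K L} (hS : S.IsValid I P) {k : ℕ}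
    (hk : k ∈ Finset.Icc 1 K) : L ≤ S.Hc (S.W k) S.allQ := by
  have hW : ∀ ω ω', S.allW ω = S.allW ω' → S.W k ω = S.W k ω' := fun ω ω' h =>
    (S.jointW_eq_iff _ ω ω').1 h k hk
  have h1 := S.Hc_anti S.allQ hW
  have h2 := hS.query_indep
  have h3 := hS.msg_entropy k hk
  have e1 : S.H (fun ω => (S.allQ ω, S.allW ω)) = S.H (fun ω => (S.allW ω, S.allQ ω)) :=
    S.H_congr fun ω ω' => by simp [and_comm]
  have e2 : S.H (fun ω => (S.allQ ω, S.W k ω)) = S.H (fun ω => (S.W k ω, S.allQ ω)) :=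
    S.H_congr fun ω ω' => by simp [and_comm]
  unfold MI at h2
  unfold Hc at *
  linarith

/-- The download cost is at least `L` plus the entropy of the answers given `W k` and `𝒬`. -/
lemma IsValid.le_D {S : PIRScheme N K L} (hS : S.IsValid I P) {k : ℕ}
    (hk : k ∈ Finset.Icc 1 K) :
    L + S.Hc (S.ansVec k) (fun ω => (S.W k ω, S.allQ ω)) ≤ S.D k := by
  have h1 : S.Hc (S.ansVec k) S.allQ ≤ S.D k :=
    (S.Hc_joint_le (fun n => S.A n k) (Finset.Icc 1 N) S.allQ).trans
      (Finset.sum_le_sum fun n _ => S.Hc_le_H _ _)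
  have h2 := S.Hc_chain (X := S.ansVec k) (Y := S.W k)
    (T := fun ω => (S.ansVec k ω, S.W k ω)) S.allQ fun ω ω' => by simp
  have h3 := S.Hc_chain (X := S.W k) (Y := S.ansVec k)
    (T := fun ω => (S.ansVec k ω, S.W k ω)) S.allQ fun ω ω' => by simp [and_comm]
  have h4 := hS.decodable k hk
  have h5 := hS.Hc_W_allQ hk
  linarith

lemma IsValid.Hc_ans_eq_zero {S : PIRScheme N K L} (hS : S.IsValid I P) {n k : ℕ}
    (hn : n ∈ Finset.Icc 1 N) (hk : k ∈ Finset.Icc 1 K) {T : Finset ℕ} (hT : I n ⊆ T) :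
    S.Hc (S.A n k) (fun ω => (S.jointW T ω, S.allQ ω)) = 0 := by
  refine le_antisymm ?_ (S.Hc_nonneg _ _)
  rw [← hS.ans_det n hn k hk]
  refine S.Hc_anti _ fun ω ω' h => ?_
  simp only [Prod.mk.injEq, jointW_eq_iff] at h ⊢
  refine ⟨fun i hi => h.1 i (hT hi), ?_⟩
  exact congrFun h.2 ⟨(n, k), Finset.mem_product.2 ⟨hn, hk⟩⟩

/-- The general converse: for servers `n 0, n 1, …` and messages `c 0, c 1, …` other than `k`, such
that message `c i` is not stored at any of the servers `n j` with `j < i`. -/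
lemma IsValid.general_bound {S : PIRScheme N K L} (hS : S.IsValid I P) {k : ℕ}
    (hk : k ∈ Finset.Icc 1 K) (hI : ∀ n ∈ Finset.Icc 1 N, I n ⊆ Finset.Icc 1 K)
    (m : ℕ) (n c : ℕ → ℕ) (hn : ∀ i < m, n i ∈ Finset.Icc 1 N)
    (hck : ∀ i < m, c i ≠ k) (hc : ∀ i < m, ∀ j < i, c i ∉ I (n j))
    (hPk : ∀ i < m, k ∈ P (n i)) (hPc : ∀ i < m, c i ∈ P (n i)) :
    L + ∑ i ∈ Finset.range m, S.Hc (S.A (n i) (c i))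
      (fun ω => (S.jointW (Finset.Icc 1 K \ {c i}) ω, S.allQ ω)) ≤ S.D k := by
  have h1 := hS.le_D hk
  have h2 : S.Hc (S.joint (fun i => S.A (n i) k) (Finset.range m))
      (fun ω => (S.W k ω, S.allQ ω)) ≤
      S.Hc (S.ansVec k) (fun ω => (S.W k ω, S.allQ ω)) :=
    S.Hc_mono _ fun ω ω' h => by
      rw [joint_eq_iff]
      intro i hi
      exact congrFun h ⟨n i, hn i (Finset.mem_range.1 hi)⟩
  have h3 := S.sum_le_Hc_joint (fun i => S.A (n i) k) (fun ω => (S.W k ω, S.allQ ω))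
    (fun i ω => (S.jointW (Finset.Icc 1 K \ {c i}) ω, S.allQ ω)) m
    (fun i hi ω ω' h => by
      simp only [Prod.mk.injEq, jointW_eq_iff] at h ⊢
      refine ⟨h.1 k ?_, h.2⟩
      simp only [Finset.mem_sdiff, Finset.mem_singleton]
      exact ⟨hk, (hck i hi).symm⟩)
    (fun i hi j hj => by
      refine hS.Hc_ans_eq_zero (hn j (hj.trans hi)) hk fun x hx => ?_
      simp only [Finset.mem_sdiff, Finset.mem_singleton]
      refine ⟨hI _ (hn j (hj.trans hi)) hx, ?_⟩
      rintro rfl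
      exact hc i hi j hj hx)
  have h4 : ∑ i ∈ Finset.range m, S.Hc (S.A (n i) (c i))
      (fun ω => (S.jointW (Finset.Icc 1 K \ {c i}) ω, S.allQ ω)) =
      ∑ i ∈ Finset.range m, S.Hc (S.A (n i) k)
      (fun ω => (S.jointW (Finset.Icc 1 K \ {c i}) ω, S.allQ ω)) :=
    Finset.sum_congr rfl fun i hi => by
      have hi' := Finset.mem_range.1 hi
      exact hS.privacy _ (hn i hi') _ (hPc i hi') _ (hPk i hi') _ Finset.sdiff_subset
  linarith

end Valid

end PIRScheme

/-! ### Cyclic indices -/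

lemma cyc_cast {N : ℕ} (hN : 0 < N) (a : ℤ) : ((cyc N a : ℕ) : ℤ) = (a - 1) % N + 1 := by
  have := Int.emod_nonneg (a - 1) (show (N : ℤ) ≠ 0 by omega)
  unfold cyc
  omega

lemma cyc_mem {N : ℕ} (hN : 0 < N) (a : ℤ) : cyc N a ∈ Finset.Icc 1 N := by
  have h1 := Int.emod_nonneg (a - 1) (show (N : ℤ) ≠ 0 by omega)
  have h2 := Int.emod_lt_of_pos (a - 1) (show (0 : ℤ) < N by omega)
  have := cyc_cast hN a
  rw [Finset.mem_Icc]
  omega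

lemma cyc_eq_iff {N : ℕ} (hN : 0 < N) (a b : ℤ) : cyc N a = cyc N b ↔ (N : ℤ) ∣ b - a := by
  have ha := cyc_cast hN a
  have hb := cyc_cast hN b
  have h : (N : ℤ) ∣ b - a ↔ (a - 1) % (N : ℤ) = (b - 1) % N := by
    rw [show b - a = (b - 1) - (a - 1) by ring]
    exact Int.modEq_iff_dvd.symm
  rw [h]
  omega

lemma cyc_self {N k : ℕ} (hk : k ∈ Finset.Icc 1 N) : cyc N k = k := by
  rw [Finset.mem_Icc] at hk
  have h := cyc_cast (N := N) (by omega) k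
  rw [Int.emod_eq_of_lt (by omega) (by omega)] at h
  omega

/-- Translates of `cyc N l` and of `l` have the same representative. -/
lemma cyc_cyc_add {N : ℕ} (hN : 0 < N) (l d : ℤ) : cyc N ((cyc N l : ℕ) + d) = cyc N (l + d) := by
  rw [cyc_eq_iff hN, cyc_cast hN, show l + d - ((l - 1) % (N : ℤ) + 1 + d) =
    (l - 1) - (l - 1) % (N : ℤ) by ring]
  exact Int.dvd_self_sub_emod

lemma cyc_ne {N : ℕ} (hN : 0 < N) {a b : ℤ} (hab : a ≠ b) (h1 : b - a < N) (h2 : a - b < N) :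
    cyc N a ≠ cyc N b := by
  rw [Ne, cyc_eq_iff hN]
  intro h
  have := Int.eq_zero_of_abs_lt_dvd h (abs_lt.2 ⟨by omega, by omega⟩)
  omega

lemma cycIndex_cyc {N : ℕ} (hN : 0 < N) (l : ℤ) :
    cycIndex N (cyc N l) = {cyc N (l - 1), cyc N l} := by
  have h1 := cyc_cyc_add hN l (-1)
  have h2 := cyc_cyc_add hN l 0
  simp only [add_zero, ← sub_eq_add_neg] at h1 h2
  rw [cycIndex, h1, h2]

lemma cyc_mem_cycInterval {N h : ℕ} (hN : 0 < N) {l t : ℤ} (h1 : l - h - 1 ≤ t) (h2 : t ≤ l + h) :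
    cyc N t ∈ cycInterval N ((cyc N l : ℕ) - (h : ℤ) - 1) (2 * h + 2) := by
  rw [cycInterval, Finset.mem_image]
  -- The index set is the image in `ℤ` of `Finset.range`, expressed by a monadic coercion.
  refine ⟨(t - (l - h - 1)).toNat, by
    simp only [Finset.bind_def, Finset.mem_sup, Finset.mem_range, Finset.pure_def,
      Finset.mem_singleton]
    exact ⟨(t - (l - h - 1)).toNat, by omega, rfl⟩, ?_⟩
  have := cyc_cyc_add hN l (t - l)
  rw [Int.toNat_of_nonneg (by omega)]
  convert this using 2 <;> ring

/-- **Per-index bound in the converse of Theorem 7**: for every `N ≥ 3`, every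
`h ∈ {0, 1, …, ⌊(N-3)/2⌋}`, every PIR scheme with cyclic-graph storage on `N`
servers and privacy sets `𝒫_n = [n-h-1 : n+h] (mod N)`, and every index
`k ∈ [1:N]`, the download cost satisfies
`D k ≥ L + ∑_{l=k-h}^{k} H(A l (l-1) | (W j)_{j ≠ l-1}, 𝒬)
        + ∑_{l=k+1}^{k+h+1} H(A l l | (W j)_{j ≠ l}, 𝒬)`,
with all server and message indices taken modulo `N`. -/
theorem cyclic_twoSided_hNeighbor_per_index_bound (N h : ℕ) (hN : 3 ≤ N)
    (hh : 2 * h + 3 ≤ N) (L : ℝ) (hL : 0 < L)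
    (S : PIRScheme N N L)
    (hS : S.IsValid (cycIndex N)
      (fun n => cycInterval N ((n : ℤ) - (h : ℤ) - 1) (2 * h + 2)))
    (k : ℕ) (hk : k ∈ Finset.Icc 1 N) :
    L +
      (∑ j ∈ Finset.range (h + 1),
        S.Hc (S.A (cyc N ((k : ℤ) - h + j)) (cyc N ((k : ℤ) - h + j - 1)))
          (fun ω =>
            (S.jointW (Finset.Icc 1 N \ {cyc N ((k : ℤ) - h + j - 1)}) ω, S.allQ ω))) +
      (∑ j ∈ Finset.range (h + 1),
        S.Hc (S.A (cyc N ((k : ℤ) + 1 + j)) (cyc N ((k : ℤ) + 1 + j)))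
          (fun ω =>
            (S.jointW (Finset.Icc 1 N \ {cyc N ((k : ℤ) + 1 + j)}) ω, S.allQ ω))) ≤
      S.D k := by
  have hN0 : 0 < N := by omega
  -- The servers in the order `k, k-1, …, k-h, k+1, …, k+h+1`, with the message kept unknown.
  let l : ℕ → ℤ := fun i => if i < h + 1 then (k : ℤ) - i else (k : ℤ) + i - h
  let c : ℕ → ℤ := fun i => if i < h + 1 then (k : ℤ) - i - 1 else (k : ℤ) + i - h
  have main := hS.general_bound hk
    (fun n _ x hx => by
      simp only [cycIndex, Finset.mem_insert, Finset.mem_singleton] at hx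
      rcases hx with rfl | rfl <;> exact cyc_mem hN0 _)
    ((h + 1) + (h + 1)) (fun i => cyc N (l i)) (fun i => cyc N (c i))
    (fun i _ => cyc_mem hN0 _)
    (fun i hi => by
      rw [← cyc_self hk]
      apply cyc_ne hN0 <;> (simp only [c]; split_ifs <;> omega))
    (fun i hi j hj => by
      simp only [cycIndex_cyc hN0, Finset.mem_insert, Finset.mem_singleton, not_or]
      constructor <;> apply cyc_ne hN0 <;> (simp only [c, l]; split_ifs <;> omega))
    (fun i hi => by
      have := cyc_mem_cycInterval (N := N) (h := h) hN0 (l := l i) (t := k)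
        (by simp only [l]; split_ifs <;> omega) (by simp only [l]; split_ifs <;> omega)
      rwa [cyc_self hk] at this)
    (fun i hi => cyc_mem_cycInterval hN0
      (by simp only [l, c]; split_ifs <;> omega) (by simp only [l, c]; split_ifs <;> omega))
  have key : ∀ l₁ l₂ c₁ c₂ : ℤ, l₁ = l₂ → c₁ = c₂ →
      S.Hc (S.A (cyc N l₁) (cyc N c₁))
        (fun ω => (S.jointW (Finset.Icc 1 N \ {cyc N c₁}) ω, S.allQ ω)) =
      S.Hc (S.A (cyc N l₂) (cyc N c₂))
        (fun ω => (S.jointW (Finset.Icc 1 N \ {cyc N c₂}) ω, S.allQ ω)) := by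
    rintro l₁ _ c₁ _ rfl rfl
    rfl
  rw [Finset.sum_range_add, ← add_assoc] at main
  refine le_of_eq_of_le ?_ main
  congr 1
  · congr 1
    rw [← Finset.sum_range_reflect]
    refine Finset.sum_congr rfl fun j hj => ?_
    rw [Finset.mem_range] at hj
    apply key <;> (simp only [l, c, if_pos hj]; omega)
  · refine Finset.sum_congr rfl fun j hj => ?_
    have hj' : ¬ (h + 1 + j < h + 1) := by omega
    apply key <;> (simp only [l, c, if_neg hj']; omega)
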